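/- Weak Hardy uncertainty principle: let a, b, M > 0 with ab ≥ 4, and let f : ℝ → ℂ be measurable with |f(x)| ≤ M e^{−a x²/2} for all x and |f̂(ξ)| ≤ M e^{−b ξ²/2} for all ξ. Then f = 0 almost everywhere. -/

import Mathlib

open MeasureTheory

lemma hardy_complex (F : ℂ → ℂ) (hF : Differentiable ℂ F) (C b : ℝ) (hC : 0 < C) (hb : 0 < b)
    (h1 : ∀ z, ‖F z‖ ≤ C * Real.exp (b / 6 * ‖z‖ ^ 2))
    (h2 : ∀ x : ℝ, ‖F x‖ ≤ C * Real.exp (-b / 2 * x ^ 2)) : ∀ z, F z = 0 := by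
  set w : ℂ := Complex.exp (Real.pi / 3 * Complex.I) with hw
  have hw3 : w ^ 3 = -1 := by
    rw [hw, ← Complex.exp_nat_mul]
    rw [show ((3 : ℕ) : ℂ) * (Real.pi / 3 * Complex.I) = Real.pi * Complex.I by push_cast; ring]
    exact Complex.exp_pi_mul_I
  have hwn : ‖w‖ = 1 := by
    rw [hw]
    have := Complex.norm_exp_ofReal_mul_I (Real.pi / 3)
    push_cast at this
    exact this
  have hw0 : w ≠ 0 := Complex.exp_ne_zero _
  set G : ℂ → ℂ := fun z => (F z * F (-z)) * ((F (w * z) * F (-(w * z))) *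
    (F (w ^ 2 * z) * F (-(w ^ 2 * z)))) with hG
  have hGd : Differentiable ℂ G := by
    rw [hG]; fun_prop
  have hGw : ∀ z, G (w * z) = G z := by
    intro z
    simp only [hG]
    rw [show w * (w * z) = w ^ 2 * z by ring, show w ^ 2 * (w * z) = -z by
      linear_combination z * hw3, neg_neg]
    ring
  have e0 : ∀ x, 0 ≤ C * Real.exp x := fun x => by positivity
  have hGg : ∀ z, ‖G z‖ ≤ C ^ 6 * Real.exp (b * ‖z‖ ^ 2) := by
    intro z
    have k1 := h1 z
    have k2 := h1 (-z)
    have k3 := h1 (w * z)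
    have k4 := h1 (-(w * z))
    have k5 := h1 (w ^ 2 * z)
    have k6 := h1 (-(w ^ 2 * z))
    simp only [norm_neg, norm_mul, norm_pow, hwn, one_mul, one_pow] at k2 k3 k4 k5 k6
    simp only [hG, norm_mul]
    calc _ ≤ (C * Real.exp (b / 6 * ‖z‖ ^ 2) * (C * Real.exp (b / 6 * ‖z‖ ^ 2))) *
        ((C * Real.exp (b / 6 * ‖z‖ ^ 2) * (C * Real.exp (b / 6 * ‖z‖ ^ 2))) *
        (C * Real.exp (b / 6 * ‖z‖ ^ 2) * (C * Real.exp (b / 6 * ‖z‖ ^ 2)))) := by gcongr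
      _ = C ^ 6 * Real.exp (b / 6 * ‖z‖ ^ 2) ^ 6 := by ring
      _ = _ := by rw [← Real.exp_nat_mul]; congr 2; push_cast; ring
  have hGr : ∀ x : ℝ, ‖G x‖ ≤ C ^ 6 * Real.exp (-(b / 3 * x ^ 2)) := by
    intro x
    have k1 := h2 x
    have k2 := h2 (-x)
    have k3 := h1 (w * x)
    have k4 := h1 (-(w * x))
    have k5 := h1 (w ^ 2 * x)
    have k6 := h1 (-(w ^ 2 * x))
    push_cast at k2
    simp only [norm_neg, norm_mul, norm_pow, hwn, one_mul, one_pow, neg_sq, Complex.norm_real,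
      Real.norm_eq_abs, sq_abs] at k2 k3 k4 k5 k6
    simp only [hG, norm_mul]
    calc _ ≤ (C * Real.exp (-b / 2 * x ^ 2) * (C * Real.exp (-b / 2 * x ^ 2))) *
        ((C * Real.exp (b / 6 * x ^ 2) * (C * Real.exp (b / 6 * x ^ 2))) *
        (C * Real.exp (b / 6 * x ^ 2) * (C * Real.exp (b / 6 * x ^ 2)))) := by gcongr
      _ = C ^ 6 * (Real.exp (-b / 2 * x ^ 2) ^ 2 * Real.exp (b / 6 * x ^ 2) ^ 4) := by ring
      _ = _ := by
        rw [← Real.exp_nat_mul, ← Real.exp_nat_mul, ← Real.exp_add]; congr 2; push_cast; ring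
  have hGr' : ∀ x : ℝ, ‖G x‖ ≤ C ^ 6 := fun x => (hGr x).trans (by
    have : Real.exp (-(b / 3 * x ^ 2)) ≤ 1 := Real.exp_le_one_iff.2 (by
      have : 0 ≤ b / 3 * x ^ 2 := by positivity
      linarith)
    have : 0 < C ^ 6 := by positivity
    nlinarith)
  have hper : Function.Periodic (fun ζ => G (Complex.exp ζ)) (Real.pi / 3 * Complex.I) := by
    intro ζ
    simp only
    rw [Complex.exp_add, mul_comm, ← hw, hGw]
  have hreal : ∀ ζ : ℂ, ζ.im = 0 → ‖G (Complex.exp ζ)‖ ≤ C ^ 6 := by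
    intro ζ h
    have : ζ = (ζ.re : ℂ) := Complex.ext (by simp) (by simp [h])
    rw [this, ← Complex.ofReal_exp]
    exact hGr' _
  have hstrip : ∀ ζ : ℂ, 0 ≤ ζ.im → ζ.im ≤ Real.pi / 3 → ‖G (Complex.exp ζ)‖ ≤ C ^ 6 := by
    intro ζ h0 h3
    refine PhragmenLindelof.horizontal_strip (f := fun ζ => G (Complex.exp ζ)) (a := 0)
      (b := Real.pi / 3) ?_ ?_ hreal ?_ h0 h3
    · exact (hGd.comp Complex.differentiable_exp).diffContOnCl
    · refine ⟨2, ?_, b, ?_⟩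
      · rw [sub_zero, lt_div_iff₀ (by positivity)]
        linarith [Real.pi_pos]
      · refine Asymptotics.IsBigO.of_bound (C ^ 6) (Filter.Eventually.of_forall fun z => ?_)
        refine (hGg _).trans ?_
        rw [Real.norm_eq_abs, Real.abs_exp, Complex.norm_exp, ← Real.exp_nat_mul]
        push_cast
        gcongr
        exact le_abs_self _
    · intro z hz
      rw [← hper.sub_eq]
      apply hreal
      have : ((Real.pi / 3 : ℂ) * Complex.I).im = Real.pi / 3 := by
        have : ((Real.pi / 3 : ℂ) * Complex.I) = ((Real.pi / 3 : ℝ) : ℂ) * Complex.I := by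
          push_cast; rfl
        rw [this, Complex.im_ofReal_mul]; simp
      rw [Complex.sub_im, hz, this, sub_self]
  have hp3 : 0 < Real.pi / 3 := by positivity
  have hball : ∀ z, ‖G z‖ ≤ C ^ 6 := by
    intro z
    by_cases hz : z = 0
    · subst hz; exact_mod_cast hGr' 0
    · rw [← Complex.exp_log hz]
      set ζ := Complex.log z
      have := hper.sub_zsmul_eq (x := ζ) ⌊ζ.im / (Real.pi / 3)⌋
      rw [← this]
      have him : (ζ - ⌊ζ.im / (Real.pi / 3)⌋ • ((Real.pi / 3 : ℂ) * Complex.I)).im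
          = ζ.im - ⌊ζ.im / (Real.pi / 3)⌋ * (Real.pi / 3) := by
        have : ⌊ζ.im / (Real.pi / 3)⌋ • ((Real.pi / 3 : ℂ) * Complex.I)
          = ((⌊ζ.im / (Real.pi / 3)⌋ * (Real.pi / 3) : ℝ) : ℂ) * Complex.I := by
          rw [zsmul_eq_mul]; push_cast; ring
        rw [this, Complex.sub_im, Complex.im_ofReal_mul]; simp
      have f1 := Int.floor_le (ζ.im / (Real.pi / 3))
      have f2 := Int.lt_floor_add_one (ζ.im / (Real.pi / 3))
      rw [le_div_iff₀ hp3] at f1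
      rw [div_lt_iff₀ hp3] at f2
      apply hstrip
      · rw [him]; linarith
      · rw [him]; linarith
  have hG0 : ∀ z, G z = 0 := by
    have hconst : ∀ z z', G z = G z' := fun z z' =>
      hGd.apply_eq_apply_of_bounded
        (isBounded_iff_forall_norm_le.2 ⟨C ^ 6, by rintro _ ⟨y, rfl⟩; exact hball y⟩) z z'
    intro z
    have hlim : Filter.Tendsto (fun x : ℝ => C ^ 6 * Real.exp (-(b / 3 * x ^ 2))) Filter.atTop
        (nhds (C ^ 6 * 0)) := by
      refine Filter.Tendsto.const_mul _ (Real.tendsto_exp_neg_atTop_nhds_zero.comp ?_)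
      exact (Filter.tendsto_pow_atTop two_ne_zero).const_mul_atTop (by positivity)
    rw [mul_zero] at hlim
    have := ge_of_tendsto' hlim (fun x => (hconst z x ▸ hGr x : ‖G z‖ ≤ _))
    exact norm_le_zero_iff.1 this
  have han : AnalyticOnNhd ℂ F Set.univ := fun z _ => hF.analyticAt z
  have key : ∀ c : ℂ, c ≠ 0 → (∀ᶠ z in nhdsWithin (0 : ℂ) {0}ᶜ, F z ≠ 0) →
      ∀ᶠ z in nhdsWithin (0 : ℂ) {0}ᶜ, F (c * z) ≠ 0 := by
    intro c hc h
    have : Filter.Tendsto (fun z : ℂ => c * z) (nhdsWithin 0 {0}ᶜ) (nhdsWithin 0 {0}ᶜ) := by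
      refine tendsto_nhdsWithin_iff.2 ⟨?_, ?_⟩
      · refine Filter.Tendsto.mono_left ?_ nhdsWithin_le_nhds
        exact (continuous_const_mul c).tendsto' _ _ (by simp)
      · filter_upwards [self_mem_nhdsWithin] with z hz
        exact mul_ne_zero hc hz
    exact this.eventually h
  rcases (hF.analyticAt 0).eventually_eq_zero_or_eventually_ne_zero with h | h
  · intro z
    exact han.eqOn_zero_of_preconnected_of_eventuallyEq_zero isPreconnected_univ
      (Set.mem_univ 0) h (Set.mem_univ z)
  · exfalso
    have a1 := key (-1) (by simp) h
    have a2 := key w hw0 h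
    have a3 := key (-w) (by simpa) h
    have a4 := key (w ^ 2) (by simp [hw0]) h
    have a5 := key (-w ^ 2) (by simp [hw0]) h
    obtain ⟨z, b0, b1, b2, b3, b4, b5⟩ :=
      (h.and (a1.and (a2.and (a3.and (a4.and a5))))).exists
    have := hG0 z
    simp only [hG, mul_eq_zero] at this
    simp only [neg_mul, one_mul] at b1 b3 b5
    tauto

lemma hardy_int (a M : ℝ) (ha : 0 < a) (hM : 0 < M) (f : ℝ → ℂ) (hf : Measurable f)
    (hfbound : ∀ x : ℝ, ‖f x‖ ≤ M * Real.exp (-a * x ^ 2 / 2)) :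
    (∀ z : ℂ, ‖∫ x : ℝ, Complex.exp (-(Complex.I * x * z)) * f x‖ ≤
      (M * ∫ x : ℝ, Real.exp (-(a / 8) * x ^ 2)) * Real.exp (2 / 3 / a * ‖z‖ ^ 2)) ∧
    Differentiable ℂ (fun z : ℂ => ∫ x : ℝ, Complex.exp (-(Complex.I * x * z)) * f x) ∧
    Integrable f := by
  have hint : Integrable (fun x : ℝ => Real.exp (-(a / 8) * x ^ 2)) :=
    integrable_exp_neg_mul_sq (by positivity)
  have hq : ∀ (x t : ℝ), |x| * t - a * x ^ 2 / 2 ≤ 2 / 3 / a * t ^ 2 + -(a / 8) * x ^ 2 := by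
    intro x t
    have : 2 / 3 / a * t ^ 2 + -(a / 8) * x ^ 2 - (|x| * t - a * x ^ 2 / 2)
       = 2 / 3 / a * (t - 3 / 4 * a * |x|) ^ 2 := by
      rw [← sq_abs x]; field_simp; ring
    have h2 : 0 ≤ 2 / 3 / a * (t - 3 / 4 * a * |x|) ^ 2 := by positivity
    linarith
  have hn : ∀ (x : ℝ) (z : ℂ), ‖Complex.exp (-(Complex.I * x * z))‖ ≤ Real.exp (|x| * ‖z‖) := by
    intro x z
    refine (Complex.norm_exp_le_exp_norm _).trans ?_
    simp
  have hb : ∀ (x t : ℝ), Real.exp (|x| * t) * ‖f x‖ ≤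
      M * Real.exp (2 / 3 / a * t ^ 2) * Real.exp (-(a / 8) * x ^ 2) := by
    intro x t
    calc _ ≤ Real.exp (|x| * t) * (M * Real.exp (-a * x ^ 2 / 2)) := by gcongr; exact hfbound x
      _ = M * Real.exp (|x| * t - a * x ^ 2 / 2) := by
        rw [mul_left_comm, ← Real.exp_add]; congr 2; ring
      _ ≤ M * Real.exp (2 / 3 / a * t ^ 2 + -(a / 8) * x ^ 2) := by gcongr; exact hq x t
      _ = _ := by rw [Real.exp_add]; ring
  have hbz : ∀ (x : ℝ) (z : ℂ), ‖Complex.exp (-(Complex.I * x * z)) * f x‖ ≤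
      M * Real.exp (2 / 3 / a * ‖z‖ ^ 2) * Real.exp (-(a / 8) * x ^ 2) := by
    intro x z
    rw [norm_mul]
    refine le_trans ?_ (hb x ‖z‖)
    gcongr; exact hn x z
  have hmeas : ∀ z : ℂ, AEStronglyMeasurable
      (fun x : ℝ => Complex.exp (-(Complex.I * x * z)) * f x) volume := by
    intro z
    apply Measurable.aestronglyMeasurable
    fun_prop
  have hI : ∀ z : ℂ, Integrable (fun x : ℝ => Complex.exp (-(Complex.I * x * z)) * f x) :=
    fun z => (hint.const_mul (M * Real.exp (2 / 3 / a * ‖z‖ ^ 2))).mono' (hmeas z)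
      (Filter.Eventually.of_forall fun x => hbz x z)
  refine ⟨?_, ?_, by simpa using hI 0⟩
  · intro z
    refine (norm_integral_le_of_norm_le (hint.const_mul (M * Real.exp (2 / 3 / a * ‖z‖ ^ 2)))
      (Filter.Eventually.of_forall fun x => hbz x z)).trans ?_
    rw [integral_const_mul]
    apply le_of_eq; ring
  · intro z₀
    refine (hasDerivAt_integral_of_dominated_loc_of_deriv_le (Metric.ball_mem_nhds z₀ one_pos)
      (Filter.Eventually.of_forall hmeas) (hI z₀)
      (F' := fun z x => Complex.exp (-(Complex.I * x * z)) * (-(Complex.I * x)) * f x)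
      (bound := fun x => M * Real.exp (2 / 3 / a * (‖z₀‖ + 2) ^ 2) * Real.exp (-(a / 8) * x ^ 2))
      ?_ ?_ (hint.const_mul _) ?_).2.differentiableAt
    · apply Measurable.aestronglyMeasurable
      fun_prop
    · refine Filter.Eventually.of_forall fun x z hz => ?_
      refine le_trans ?_ (hb x (‖z₀‖ + 2))
      rw [norm_mul, norm_mul]
      gcongr
      have hz' : ‖z‖ ≤ ‖z₀‖ + 1 := by
        have := norm_le_norm_add_norm_sub' z z₀
        rw [mem_ball_iff_norm] at hz
        linarith
      calc _ ≤ Real.exp (|x| * (‖z₀‖ + 1)) * Real.exp |x| := by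
            gcongr
            · exact (hn x z).trans (by gcongr)
            · simp only [norm_neg, norm_mul, Complex.norm_I, one_mul, Complex.norm_real,
                Real.norm_eq_abs]
              linarith [Real.add_one_le_exp |x|]
        _ = _ := by rw [← Real.exp_add]; congr 1; ring
    · refine Filter.Eventually.of_forall fun x z _ => ?_
      have : HasDerivAt (fun z : ℂ => -(Complex.I * x * z)) (-(Complex.I * x)) z := by
        have h5 := ((hasDerivAt_id z).const_mul (Complex.I * (x : ℂ))).neg
        rw [mul_one] at h5
        exact h5
      exact this.cexp.mul_const _

open FourierTransform in
lemma hardy_inj (f : ℝ → ℂ) (hf : Integrable f)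
    (h : ∀ ξ : ℝ, ∫ x : ℝ, Complex.exp (-(Complex.I * x * ξ)) * f x = 0) : f =ᵐ[volume] 0 := by
  have h0 : 𝓕 f = 0 := by
    ext w
    rw [Real.fourier_real_eq_integral_exp_smul, Pi.zero_apply, ← h (2 * Real.pi * w)]
    congr 1; ext x; rw [smul_eq_mul]; congr 2; push_cast; ring
  refine ae_eq_zero_of_integral_contDiff_smul_eq_zero hf.locallyIntegrable ?_
  intro g hg hgc
  have hc : HasCompactSupport (fun x => (g x : ℂ)) := hgc.comp_left (g := Complex.ofReal) rfl
  have hs : ContDiff ℝ (⊤ : ℕ∞) (fun x => (g x : ℂ)) := Complex.ofRealCLM.contDiff.comp hg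
  set φ : SchwartzMap ℝ ℂ := hc.toSchwartzMap hs
  set ψ : SchwartzMap ℝ ℂ := 𝓕⁻ φ
  have e : 𝓕 ψ = φ := FourierTransform.fourier_fourierInv_eq φ
  have := VectorFourier.integral_fourierIntegral_smul_eq_flip (L := innerₗ ℝ) (μ := volume)
    (ν := volume) Real.continuous_fourierChar continuous_inner (f := ψ) (g := f) ψ.integrable hf
  have e2 : ∀ x, VectorFourier.fourierIntegral Real.fourierChar volume (innerₗ ℝ) ψ x = g x := by
    intro x
    have : (𝓕 ψ) x = φ x := by rw [e]
    rw [SchwartzMap.fourier_coe] at this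
    exact this
  have e3 : ∀ x, VectorFourier.fourierIntegral Real.fourierChar volume (innerₗ ℝ) f x = 0 := by
    intro x
    exact congrFun h0 x
  simp only [flip_innerₗ, e2, e3, smul_zero, integral_zero] at this
  rw [← this]
  congr 1

theorem weak_hardy_uncertainty (a b M : ℝ) (ha : 0 < a) (hb : 0 < b) (hM : 0 < M)
    (hab : 4 ≤ a * b) (f : ℝ → ℂ) (hf : Measurable f)
    (hfbound : ∀ x : ℝ, ‖f x‖ ≤ M * Real.exp (-a * x ^ 2 / 2))
    (hfhat : ∀ ξ : ℝ, ‖(Real.sqrt (2 * Real.pi) : ℂ)⁻¹ *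
        ∫ x : ℝ, Complex.exp (-(Complex.I * x * ξ)) * f x‖ ≤ M * Real.exp (-b * ξ ^ 2 / 2)) :
    f =ᵐ[volume] 0 := by
  obtain ⟨h1, h2, h3⟩ := hardy_int a M ha hM f hf hfbound
  refine hardy_inj f h3 fun ξ => ?_
  set K := M * ∫ x : ℝ, Real.exp (-(a / 8) * x ^ 2)
  have hs : 0 < Real.sqrt (2 * Real.pi) := by positivity
  have hK : 0 ≤ K := mul_nonneg hM.le (integral_nonneg fun x => (Real.exp_pos _).le)
  have hMs : 0 < Real.sqrt (2 * Real.pi) * M := by positivity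
  refine hardy_complex _ h2 (K + Real.sqrt (2 * Real.pi) * M) b (by positivity) hb ?_ ?_ ξ
  · intro z
    refine (h1 z).trans ?_
    have : 2 / 3 / a ≤ b / 6 := by
      rw [div_le_iff₀ ha]; linarith
    gcongr
    linarith
  · intro x
    have := hfhat x
    rw [norm_mul, norm_inv, Complex.norm_real, Real.norm_eq_abs, abs_of_pos hs,
      inv_mul_le_iff₀ hs, ← mul_assoc, show -b * x ^ 2 / 2 = -b / 2 * x ^ 2 by ring] at this
    refine this.trans ?_
    gcongr
    linarith
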